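/- No finite nonabelian group has the strong CFS property; equivalently, every finite group with the strong CFS property is abelian. -/

import Mathlib

/-- `G = A · B`: every element of `G` can be written in exactly one way as `a * b`
with `a ∈ A` and `b ∈ B`. -/
def IsDirectProd {G : Type*} [Group G] (A B : Set G) : Prop :=
  ∀ g : G, ∃! p : G × G, p.1 ∈ A ∧ p.2 ∈ B ∧ p.1 * p.2 = g

/-- `A` is a left factor of `G`: there is `B ⊆ G` with `G = A · B`. -/
def IsLeftFactor {G : Type*} [Group G] (A : Set G) : Prop :=
  ∃ B : Set G, IsDirectProd A B

/-- `A` is a right factor of `G`: there is `B ⊆ G` with `G = B · A`. -/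
def IsRightFactor {G : Type*} [Group G] (A : Set G) : Prop :=
  ∃ B : Set G, IsDirectProd B A

/-- `A` is a factor of `G`: it is a left factor or a right factor of `G`. -/
def IsFactor {G : Type*} [Group G] (A : Set G) : Prop :=
  IsLeftFactor A ∨ IsRightFactor A

/-- A group `G` has the strong CFS property if every Lagrange subset of `G`
(i.e. every subset whose cardinality divides `|G|`) is a factor of `G`. -/
def HasStrongCFS (G : Type*) [Group G] : Prop :=
  ∀ A : Set G, Nat.card A ∣ Nat.card G → IsFactor A

lemma dp_card {G : Type*} [Group G] {A B : Set G} (h : IsDirectProd A B) :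
    Nat.card A * Nat.card B = Nat.card G := by
  rw [← Nat.card_prod]
  refine Nat.card_congr (Equiv.ofBijective (fun p : A × B => (p.1 : G) * p.2) ⟨?_, ?_⟩)
  · rintro ⟨a, b⟩ ⟨c, d⟩ hh
    have := (h (a * b)).unique (y₁ := (a.1, b.1)) (y₂ := (c.1, d.1)) ⟨a.2, b.2, rfl⟩
      ⟨c.2, d.2, hh.symm⟩
    simp only [Prod.mk.injEq] at this
    exact Prod.ext (Subtype.ext this.1) (Subtype.ext this.2)
  · intro g
    obtain ⟨p, ⟨h1, h2, h3⟩, -⟩ := h g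
    exact ⟨(⟨p.1, h1⟩, ⟨p.2, h2⟩), h3⟩

lemma dp_left {G : Type*} [Group G] (K : Subgroup G) {A : Set K} {B : Set G}
    (h : IsDirectProd (Subtype.val '' A) B) : IsDirectProd A (Subtype.val ⁻¹' B) := by
  intro g
  obtain ⟨⟨x, b⟩, ⟨⟨a, ha, hax⟩, h2, h3⟩, h4⟩ := h g.1
  simp only at hax h2 h3
  subst hax
  have hb : b ∈ K := by
    have : b = (a⁻¹ * g : K).1 := by rw [Subgroup.coe_mul, ← h3]; simp
    rw [this]; exact SetLike.coe_mem _
  refine ⟨(a, ⟨b, hb⟩), ⟨ha, h2, Subtype.ext h3⟩, ?_⟩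
  rintro ⟨c, d⟩ ⟨h5, h6, h7⟩
  have := h4 (c.1, d.1) ⟨⟨c, h5, rfl⟩, h6, by rw [← h7]; rfl⟩
  simp only [Prod.mk.injEq] at this
  exact Prod.ext (Subtype.ext this.1) (Subtype.ext this.2)

lemma dp_right {G : Type*} [Group G] (K : Subgroup G) {A : Set K} {B : Set G}
    (h : IsDirectProd B (Subtype.val '' A)) : IsDirectProd (Subtype.val ⁻¹' B) A := by
  intro g
  obtain ⟨⟨b, x⟩, ⟨h2, ⟨a, ha, hax⟩, h3⟩, h4⟩ := h g.1
  simp only at hax h2 h3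
  subst hax
  have hb : b ∈ K := by
    have : b = (g * a⁻¹ : K).1 := by rw [Subgroup.coe_mul, ← h3]; simp
    rw [this]; exact SetLike.coe_mem _
  refine ⟨(⟨b, hb⟩, a), ⟨h2, ha, Subtype.ext h3⟩, ?_⟩
  rintro ⟨d, c⟩ ⟨h6, h5, h7⟩
  have := h4 (d.1, c.1) ⟨h6, ⟨c, h5, rfl⟩, by rw [← h7]; rfl⟩
  simp only [Prod.mk.injEq] at this
  exact Prod.ext (Subtype.ext this.1) (Subtype.ext this.2)

lemma factor_sub {G : Type*} [Group G] (K : Subgroup G) {A : Set K}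
    (h : IsFactor (Subtype.val '' A : Set G)) : IsFactor A := by
  rcases h with ⟨B, h⟩ | ⟨B, h⟩
  · exact Or.inl ⟨_, dp_left K h⟩
  · exact Or.inr ⟨_, dp_right K h⟩

lemma factor_dvd {G : Type*} [Group G] {A : Set G} (h : IsFactor A) :
    Nat.card A ∣ Nat.card G := by
  rcases h with ⟨B, h⟩ | ⟨B, h⟩
  · exact ⟨_, (dp_card h).symm⟩
  · exact ⟨_, by rw [mul_comm]; exact (dp_card h).symm⟩

lemma card_val_image {G : Type*} [Group G] (K : Subgroup G) (A : Set K) :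
    Nat.card (Subtype.val '' A : Set G) = Nat.card A :=
  Nat.card_image_of_injective Subtype.val_injective A

lemma strong_sub {G : Type*} [Group G] (h : HasStrongCFS G) (K : Subgroup G) :
    HasStrongCFS K := by
  intro A hA
  apply factor_sub
  apply h
  rw [card_val_image]
  exact hA.trans K.card_subgroup_dvd_card

lemma exists_set_card {G : Type*} [Finite G] (A : Set G) (n : ℕ) (h1 : Nat.card A ≤ n)
    (h2 : n ≤ Nat.card G) : ∃ A' : Set G, A ⊆ A' ∧ Nat.card A' = n := by
  classical
  have := Fintype.ofFinite G
  rw [Nat.card_eq_card_toFinset] at h1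
  rw [Nat.card_eq_fintype_card] at h2
  obtain ⟨t, h3, h4⟩ := Finset.exists_superset_card_eq h1 h2
  refine ⟨t, fun x hx => h3 (by simpa using hx), by simpa using h4⟩

lemma not_factor {G : Type*} [Group G] [Finite G] {A : Set G} (hc : Nat.card A < Nat.card G)
    (h1 : ∀ g, ∃ x ∈ A, ∃ y ∈ A, g = x * y⁻¹) (h2 : ∀ g, ∃ x ∈ A, ∃ y ∈ A, g = x⁻¹ * y) :
    ¬ IsFactor A := by
  have key : ∀ B : Set G, B.Subsingleton → Nat.card A * Nat.card B ≠ Nat.card G := by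
    intro B hB h
    have : Subsingleton B := hB.coe_sort
    have : Nat.card B ≤ 1 := Finite.card_le_one_iff_subsingleton.2 this
    nlinarith
  rintro (⟨B, h⟩ | ⟨B, h⟩)
  · refine key B ?_ (dp_card h)
    intro b hb c hc
    obtain ⟨x, hx, y, hy, hh⟩ := h2 (b * c⁻¹)
    have e : x * b = y * c := by
      rw [mul_inv_eq_iff_eq_mul] at hh; rw [hh]; group
    have := (h (x * b)).unique (y₁ := (x, b)) (y₂ := (y, c)) ⟨hx, hb, rfl⟩ ⟨hy, hc, e.symm⟩
    exact (Prod.mk.inj this).2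
  · refine key B ?_ (by rw [mul_comm]; exact dp_card h)
    intro b hb c hc
    obtain ⟨x, hx, y, hy, hh⟩ := h1 (b⁻¹ * c)
    have e : b * x = c * y := by
      rw [inv_mul_eq_iff_eq_mul] at hh; rw [hh]; group
    have := (h (b * x)).unique (y₁ := (b, x)) (y₂ := (c, y)) ⟨hb, hx, rfl⟩ ⟨hc, hy, e.symm⟩
    exact (Prod.mk.inj this).1

/-- In a finite group of odd order, a half-set. -/
lemma half_set (Q : Type*) [Group Q] [Finite Q] (hodd : Odd (Nat.card Q)) :
    ∃ T : Set Q, 2 * Nat.card T ≤ Nat.card Q ∧ ∀ q : Q, q = 1 ∨ q ∈ T ∨ q⁻¹ ∈ T := by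
  classical
  obtain ⟨n, ⟨e⟩⟩ := Finite.exists_equiv_fin Q
  refine ⟨{q | e q < e q⁻¹}, ?_, ?_⟩
  · have hd : Disjoint {q | e q < e q⁻¹} {q | e q⁻¹ < e q} := by
      rw [Set.disjoint_left]
      intro q h1 h2
      simp only [Set.mem_setOf_eq] at h1 h2
      exact lt_asymm h1 h2
    have hcard : Set.ncard {q | e q < e q⁻¹} = Set.ncard {q | e q⁻¹ < e q} := by
      refine Set.ncard_congr (fun q _ => q⁻¹) ?_ ?_ ?_
      · intro q hq; simpa using hq
      · intro a b _ _ h; simpa using h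
      · intro b hb; exact ⟨b⁻¹, by simpa using hb, by simp⟩
    have := Set.ncard_union_eq hd
    have h3 := Set.ncard_le_card ({q | e q < e q⁻¹} ∪ {q | e q⁻¹ < e q})
    rw [Nat.card_coe_set_eq]
    omega
  · intro q
    rcases lt_trichotomy (e q) (e q⁻¹) with h | h | h
    · exact Or.inr (Or.inl h)
    · left
      have h2 : q ^ 2 = 1 := by
        have := e.injective h
        rw [pow_two]; nth_rewrite 1 [this]; simp
      have h3 : orderOf q ∣ 2 := orderOf_dvd_of_pow_eq_one h2
      have h4 : orderOf q ∣ Nat.card Q := orderOf_dvd_natCard q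
      have h5 : orderOf q ∣ 1 := by
        have := Nat.dvd_gcd h3 h4
        rwa [Nat.Coprime.gcd_eq_one hodd.coprime_two_left] at this
      exact orderOf_eq_one_iff.1 (Nat.dvd_one.1 h5)
    · right; right
      simpa using h

lemma odd_case {G : Type*} [Group G] [Finite G] {p : ℕ} (hp : p.Prime) (hodd : p ≠ 2)
    (hG : Nat.card G = p ^ 3) : ¬ HasStrongCFS G := by
  intro hS
  have : Fact p.Prime := ⟨hp⟩
  have hp3 : 3 ≤ p := by have := hp.two_le; omega
  have hpG : IsPGroup p G := IsPGroup.of_card hG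
  have : Nontrivial G := Finite.one_lt_card_iff_nontrivial.1 (by
    rw [hG]; exact Nat.one_lt_pow (by norm_num) hp.one_lt)
  have := hpG.center_nontrivial
  have hdc : p ∣ Nat.card (Subgroup.center G) := by
    obtain ⟨n, hn, hn'⟩ := (hpG.to_subgroup (Subgroup.center G)).nontrivial_iff_card.1 this
    rw [hn']; exact dvd_pow_self _ hn.ne'
  obtain ⟨z, hz⟩ := exists_prime_orderOf_dvd_card' p hdc
  set H : Subgroup G := Subgroup.zpowers z.1 with hH
  have hHc : H ≤ Subgroup.center G := by
    rw [hH, Subgroup.zpowers_le]; exact z.2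
  have hcard : Nat.card H = p := by
    rw [hH, Nat.card_zpowers, Subgroup.orderOf_coe, hz]
  have hn : H.Normal := by
    constructor
    intro n hn g
    have := Subgroup.mem_center_iff.1 (hHc hn) g
    rw [this]; simpa using hn
  have hQ : Nat.card (G ⧸ H) = p ^ 2 := by
    have := H.card_eq_card_quotient_mul_card_subgroup
    rw [hG, hcard] at this
    have h2 : p ^ 2 * p = Nat.card (G ⧸ H) * p := by rw [← this]; ring
    exact (Nat.eq_of_mul_eq_mul_right hp.pos h2).symm
  obtain ⟨T, hT, hT'⟩ := half_set (G ⧸ H) (by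
    rw [hQ]; exact (hp.odd_of_ne_two hodd).pow)
  have hA0 : Nat.card ((H : Set G) ∪ Quotient.out '' T : Set G) ≤ p ^ 2 := by
    rw [Nat.card_coe_set_eq]
    have h1 := Set.ncard_union_le (H : Set G) (Quotient.out '' T)
    have h2 := Set.ncard_image_le (f := (Quotient.out : G ⧸ H → G)) (s := T)
    have h3 : Set.ncard (H : Set G) = p := hcard
    rw [Nat.card_coe_set_eq, hQ] at hT
    nlinarith
  obtain ⟨A, hA, hAc⟩ := exists_set_card _ (p ^ 2) hA0 (by
    rw [hG]; exact Nat.pow_le_pow_right hp.pos (by norm_num))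
  have hAH : ∀ x ∈ H, x ∈ A := fun x hx => hA (Or.inl hx)
  have main : ∀ g : G, (g : G ⧸ H) ∈ T →
      ∃ t ∈ A, ∃ k ∈ H, g = t * k ∧ g = k * t := by
    intro g hg
    refine ⟨Quotient.out (g : G ⧸ H), hA (Or.inr ⟨_, hg, rfl⟩), 
      (Quotient.out (g : G ⧸ H))⁻¹ * g, ?_, by simp, ?_⟩
    · rw [← QuotientGroup.eq]; exact QuotientGroup.out_eq' _
    · have hm : (Quotient.out (g : G ⧸ H))⁻¹ * g ∈ H := by
        rw [← QuotientGroup.eq]; exact QuotientGroup.out_eq' _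
      rw [← Subgroup.mem_center_iff.1 (hHc hm)]; simp
  refine not_factor ?_ ?_ ?_ (hS A ?_)
  · rw [hAc, hG]; exact Nat.pow_lt_pow_right hp.one_lt (by norm_num)
  · intro g
    rcases hT' (g : G ⧸ H) with h | h | h
    · exact ⟨g, hAH _ ((QuotientGroup.eq_one_iff g).1 h), 1, hAH _ H.one_mem, by simp⟩
    · obtain ⟨t, ht, k, hk, h1, h2⟩ := main g h
      exact ⟨t, ht, k⁻¹, hAH _ (H.inv_mem hk), by simpa using h1⟩
    · obtain ⟨t, ht, k, hk, h1, h2⟩ := main g⁻¹ h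
      exact ⟨k⁻¹, hAH _ (H.inv_mem hk), t, ht, by rw [← inv_inv g, h1]; simp⟩
  · intro g
    rcases hT' (g : G ⧸ H) with h | h | h
    · exact ⟨1, hAH _ H.one_mem, g, hAH _ ((QuotientGroup.eq_one_iff g).1 h), by simp⟩
    · obtain ⟨t, ht, k, hk, h1, h2⟩ := main g h
      exact ⟨k⁻¹, hAH _ (H.inv_mem hk), t, ht, by simpa using h2⟩
    · obtain ⟨t, ht, k, hk, h1, h2⟩ := main g⁻¹ h
      exact ⟨t, ht, k⁻¹, hAH _ (H.inv_mem hk), by rw [← inv_inv g, h2]; simp⟩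
  · rw [hAc, hG]; exact pow_dvd_pow _ (by norm_num)

lemma two_case {G : Type*} [Group G] [Finite G] (hG : Nat.card G = 8) (a : G)
    (ha : orderOf a = 4) : ¬ HasStrongCFS G := by
  classical
  intro hS
  set H := Subgroup.zpowers a with hH
  have hHc : Nat.card H = 4 := by rw [hH, Nat.card_zpowers, ha]
  have hi : H.index = 2 := by
    have := H.card_mul_index
    rw [hHc, hG] at this; omega
  have hn : H.Normal := Subgroup.normal_of_index_eq_two hi
  have hmem : ∀ x ∈ H, x = 1 ∨ x = a ∨ x = a ^ 2 ∨ x = a ^ 3 := by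
    intro x hx
    rw [hH, mem_zpowers_iff_mem_range_orderOf, ha] at hx
    simp [Finset.range_add_one] at hx
    tauto
  have haH : a ∈ H := Subgroup.mem_zpowers a
  have h4 : a ^ 4 = 1 := by rw [← ha]; exact pow_orderOf_eq_one a
  have h1 : a ≠ 1 := by rintro rfl; simp at ha
  have h2 : a ^ 2 ≠ 1 := by
    intro h
    have := orderOf_dvd_of_pow_eq_one h
    rw [ha] at this; omega
  have hinv : a⁻¹ = a ^ 3 := by rw [inv_eq_iff_mul_eq_one, ← pow_succ']; exact h4
  obtain ⟨t, ht⟩ : ∃ t, t ∉ H := by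
    by_contra! hh
    have : H = ⊤ := by ext; simp [hh]
    rw [this] at hi; simp at hi
  have hcoset : ∀ g, g ∉ H → g = t ∨ g = a * t ∨ g = a ^ 2 * t ∨ g = a ^ 3 * t := by
    intro g hg
    have : g * t⁻¹ ∈ H := by
      rw [Subgroup.mul_mem_iff_of_index_two hi]; simp [hg, ht]
    have := hmem _ this
    simp only [mul_inv_eq_iff_eq_mul, one_mul] at this
    exact this
  have hconj : t * a * t⁻¹ = a ∨ t * a * t⁻¹ = a ^ 3 := by
    rcases hmem _ (hn.conj_mem a haH t) with h | h | h | h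
    · exact absurd (by simpa [mul_inv_eq_iff_eq_mul] using h) h1
    · exact Or.inl h
    · exfalso
      have h5 : (t * a * t⁻¹) ^ 2 = 1 := by rw [h, ← pow_mul]; exact h4
      rw [conj_pow] at h5
      exact h2 (by simpa [mul_inv_eq_iff_eq_mul] using h5)
    · exact Or.inr h
  have hta : t * a = a * t ∨ t * a = a ^ 3 * t := by
    simpa only [mul_inv_eq_iff_eq_mul] using hconj
  have hta2 : t * a ^ 2 = a ^ 2 * t := by
    rcases hta with h | h
    · rw [pow_two, ← mul_assoc, h, mul_assoc, h, mul_assoc]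
    · have e : t * a ^ 2 = a ^ 4 * (a ^ 2 * t) := by
        calc t * a ^ 2 = (t * a) * a := by rw [pow_two, mul_assoc]
          _ = a ^ 3 * (t * a) := by rw [← mul_assoc, ← h]
          _ = a ^ 4 * (a ^ 2 * t) := by rw [h]; group
      rw [e, h4, one_mul]
  have hta3 : t * a ^ 3 = a ^ 3 * t ∨ t * a ^ 3 = a * t := by
    have e : t * a ^ 3 = a ^ 2 * (t * a) := by
      rw [← mul_assoc, ← hta2, mul_assoc, ← pow_succ]
    rcases hta with h | h
    · left; rw [e, h, ← mul_assoc, ← pow_succ]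
    · right
      rw [e, h, ← mul_assoc, ← pow_add, show 2 + 3 = 4 + 1 from rfl, pow_add, h4]; simp
  have h22 : (a ^ 2)⁻¹ = a ^ 2 := by
    rw [inv_eq_iff_mul_eq_one, ← pow_add]; exact h4
  have h33 : (a ^ 3)⁻¹ = a := by rw [← hinv, inv_inv]
  have h2a3 : a ^ 2 * a ^ 3 = a := by
    rw [← pow_add, show 2 + 3 = 4 + 1 from rfl, pow_add, h4]; simp
  let A : Set G := {1, a, t, a ^ 2 * t}
  have m1 : (1 : G) ∈ A := by simp [A]
  have m2 : a ∈ A := by simp [A]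
  have m3 : t ∈ A := by simp [A]
  have m4 : a ^ 2 * t ∈ A := by simp [A]
  have hAc : Nat.card A = 4 := by
    have e1 : t ≠ 1 := by rintro rfl; exact ht H.one_mem
    have e2 : t ≠ a := by rintro rfl; exact ht haH
    have e0 : a ^ 2 * t ∉ H := by
      rw [Subgroup.mul_mem_cancel_left _ (H.pow_mem haH 2)]; exact ht
    have e3 : a ^ 2 * t ≠ 1 := fun h => e0 (h ▸ H.one_mem)
    have e4 : a ^ 2 * t ≠ a := fun h => e0 (h.symm ▸ haH)
    have e5 : a ^ 2 * t ≠ t := by simpa using h2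
    rw [Nat.card_coe_set_eq]
    have : A = (({1, a, t, a ^ 2 * t} : Finset G) : Set G) := by simp [A]
    rw [this, Set.ncard_coe_finset]
    rw [Finset.card_insert_of_notMem, Finset.card_insert_of_notMem,
      Finset.card_insert_of_notMem, Finset.card_singleton]
    · simpa using e5.symm
    · simp only [Finset.mem_insert, Finset.mem_singleton, not_or]
      exact ⟨e2.symm, e4.symm⟩
    · simp only [Finset.mem_insert, Finset.mem_singleton, not_or]
      exact ⟨h1.symm, e1.symm, e3.symm⟩
  refine not_factor ?_ ?_ ?_ (hS A ?_)
  · rw [hAc, hG]; norm_num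
  · intro g
    by_cases hg : g ∈ H
    · rcases hmem g hg with rfl | rfl | rfl | rfl
      · exact ⟨1, m1, 1, m1, by simp⟩
      · exact ⟨_, m2, 1, m1, by simp⟩
      · exact ⟨_, m4, t, m3, by simp⟩
      · exact ⟨1, m1, a, m2, by simp [hinv]⟩
    · rcases hcoset g hg with rfl | rfl | rfl | rfl
      · exact ⟨_, m3, 1, m1, by simp⟩
      · rcases hta3 with h | h
        · exact ⟨_, m4, a, m2, by rw [hinv, mul_assoc, h, ← mul_assoc, h2a3]⟩
        · exact ⟨_, m3, a, m2, by rw [hinv, h]⟩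
      · exact ⟨_, m4, 1, m1, by simp⟩
      · rcases hta3 with h | h
        · exact ⟨_, m3, a, m2, by rw [hinv, h]⟩
        · exact ⟨_, m4, a, m2, by rw [hinv, mul_assoc, h, ← mul_assoc, ← pow_succ]⟩
  · intro g
    by_cases hg : g ∈ H
    · rcases hmem g hg with rfl | rfl | rfl | rfl
      · exact ⟨1, m1, 1, m1, by simp⟩
      · exact ⟨1, m1, _, m2, by simp⟩
      · exact ⟨t, m3, _, m4, by rw [← hta2]; simp⟩
      · exact ⟨a, m2, 1, m1, by simp [hinv]⟩
    · rcases hcoset g hg with rfl | rfl | rfl | rfl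
      · exact ⟨1, m1, _, m3, by simp⟩
      · exact ⟨a, m2, _, m4, by rw [pow_two]; group⟩
      · exact ⟨1, m1, _, m4, by simp⟩
      · exact ⟨a, m2, t, m3, by rw [hinv]⟩
  · rw [hAc, hG]; norm_num

lemma no_two_primes {G : Type*} [Group G] [Finite G] (h : HasStrongCFS G) {p q : ℕ}
    (hp : p.Prime) (hq : q.Prime) (hpG : p ∣ Nat.card G) (hqG : q ∣ Nat.card G) :
    ¬ p < q := by
  intro hlt
  have : Fact q.Prime := ⟨hq⟩
  obtain ⟨x, hx⟩ := exists_prime_orderOf_dvd_card' q hqG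
  have hK : Nat.card (Subgroup.zpowers x) = q := by rw [Nat.card_zpowers, hx]
  obtain ⟨A, -, hA⟩ := exists_set_card (∅ : Set (Subgroup.zpowers x)) p (by simp)
    (by rw [hK]; exact hlt.le)
  have h1 := factor_dvd (factor_sub _ (h (Subtype.val '' A) (by rw [card_val_image, hA]; exact hpG)))
  rw [hA, hK, Nat.prime_dvd_prime_iff_eq hp hq] at h1
  omega

/-- No finite nonabelian group has the strong CFS property; equivalently, every finite
group with the strong CFS property is abelian. -/
theorem stmt_18 {G : Type*} [Group G] [Finite G] (h : HasStrongCFS G) :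
    ∀ x y : G, x * y = y * x := by
  by_cases h1 : Nat.card G = 1
  · have := (Nat.card_eq_one_iff_unique.1 h1).1
    intro x y; exact Subsingleton.elim _ _
  obtain ⟨p, hp, hpG⟩ := Nat.exists_prime_and_dvd h1
  have : Fact p.Prime := ⟨hp⟩
  obtain ⟨n, hn⟩ : ∃ n, Nat.card G = p ^ n := ⟨_, Nat.eq_prime_pow_of_unique_prime_dvd
    Nat.card_pos.ne' (fun {d} hd hdG => by
      have := no_two_primes h hp hd hpG hdG
      have := no_two_primes h hd hp hdG hpG
      omega)⟩
  by_cases hn3 : 3 ≤ n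
  · by_cases hp2 : p = 2
    · subst hp2
      have hsq : ∀ x : G, x ^ 2 = 1 := by
        intro x
        by_contra hx
        obtain ⟨k, hk, hk'⟩ := (Nat.dvd_prime_pow hp).1 (hn ▸ orderOf_dvd_natCard x)
        have hk2 : 2 ≤ k := by
          by_contra hlt
          apply hx
          rw [← orderOf_dvd_iff_pow_eq_one, hk']
          exact (pow_dvd_pow 2 (show k ≤ 1 by omega))
        have h4 : 4 ∣ orderOf x := by rw [hk']; exact pow_dvd_pow 2 hk2
        have ha := orderOf_pow_orderOf_div (orderOf_pos x).ne' h4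
        set a := x ^ (orderOf x / 4)
        obtain ⟨K, hK, hle⟩ := Sylow.exists_subgroup_card_pow_prime_le (G := G) 2 (m := 3) (n := 2)
          (by rw [hn]; exact pow_dvd_pow 2 hn3) (Subgroup.zpowers a)
          (by rw [Nat.card_zpowers, ha]; norm_num) (by norm_num)
        exact two_case (by rw [hK]; norm_num) (⟨a, hle (Subgroup.mem_zpowers a)⟩ : K)
          (by rw [← Subgroup.orderOf_coe]; exact ha) (strong_sub h K)
      intro x y
      have hi : ∀ z : G, z⁻¹ = z := fun z => by
        rw [inv_eq_iff_mul_eq_one, ← pow_two]; exact hsq z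
      rw [← hi (x * y), mul_inv_rev, hi, hi]
    · obtain ⟨K, hK⟩ := Sylow.exists_subgroup_card_pow_prime (G := G) p (n := 3)
        (by rw [hn]; exact pow_dvd_pow p hn3)
      exact absurd (strong_sub h K) (odd_case hp hp2 hK)
  · have : n = 1 ∨ n = 2 := by
      have : n ≠ 0 := by rintro rfl; simp at hn; exact h1 (by simpa using hn)
      omega
    rcases this with rfl | rfl
    · have := isCyclic_of_prime_card (α := G) (p := p) (by simpa using hn)
      exact fun x y => (IsCyclic.isMulCommutative (α := G)).is_comm.comm x y
    · have := IsPGroup.isMulCommutative_of_card_eq_prime_sq hn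
      exact fun x y => this.is_comm.comm x y
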